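/- arXiv:1509.07438 — 5 statements merged into one kernel-verified Lean document; each statement's English description precedes it below -/
import Mathlib

section
/- Let t ≥ 2 and h ≥ 4t²+10t+24 be integers, and for a ∈ {0,…,t} set ℓ_a = ⌈h/(t+a+1)⌉. Then for every p with 0 < p < 1, min( (1−p)/(ℓ_0−1), min_{a∈{1,…,t}} p(1−p)/(a(1−p)+(ℓ_a−1)p) ) = min( p(1−p)/(t(1−p)+(ℓ_t−1)p), (1−p)/(ℓ_0−1) ); that is, in the minimum over a ∈ {0,…,t} only the terms a = 0 and a = t are needed. -/
/-- Ceiling division of natural numbers: `⌈a/b⌉`. -/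
def ceilDiv (a b : ℕ) : ℕ := (a + b - 1) / b

/-!
With a common numerator `p(1-p)`, the terms have denominators `D_a = a(1-p) + (ℓ_a - 1)p`, for
`a = 0` as well. If the point `(a, ℓ_a)` lies on or below the chord from `(0, ℓ_0)` to `(t, ℓ_t)`,
then `(a, D_a)` lies on or below the chord from `(0, D_0)` to `(t, D_t)`, so `D_a ≤ max D_0 D_t`.

Without the ceilings, convexity of `x ↦ h / x` leaves `(a, h/(t+a+1))` below the chord: after
scaling by `t`, the gap is `h a (t-a) t / ((t+1) (t+a+1) (2t+1))`. For `h ≥ 4t² + 8t + 13`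
this is at least the scaled rounding error `t (t+a) / (t+a+1)`, so the chord inequality survives
the ceilings.
-/

theorem inf_inf'_Icc_eq_inf {ι α : Type*} [PartialOrder ι] [LocallyFiniteOrder ι]
    [SemilatticeInf α] {m n : ι} (hmn : m ≤ n) {f : ι → α} {x : α}
    (hf : ∀ i, m ≤ i → i < n → f n ⊓ x ≤ f i) :
    x ⊓ (Finset.Icc m n).inf' (Finset.nonempty_Icc.mpr hmn) f = f n ⊓ x := by
  apply le_antisymm
  · rw [inf_comm]
    exact inf_le_inf_right x (Finset.inf'_le f (Finset.right_mem_Icc.mpr hmn))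
  · refine le_inf inf_le_right (Finset.le_inf' _ _ fun i hi => ?_)
    obtain ⟨hmi, hin⟩ := Finset.mem_Icc.mp hi
    rcases hin.eq_or_lt with rfl | hlt
    · exact inf_le_left
    · exact hf i hmi hlt

section OrderedField

variable {K : Type*} [Field K] [LinearOrder K] [IsStrictOrderedRing K]

theorem le_max_of_mul_le_add_mul {a t x y z : K} (ha : 0 ≤ a) (hat : a ≤ t) (ht : 0 < t)
    (hchord : t * y ≤ (t - a) * x + a * z) : y ≤ max x z := by
  refine le_of_mul_le_mul_left ?_ ht
  calc t * y ≤ (t - a) * x + a * z := hchord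
    _ ≤ (t - a) * max x z + a * max x z :=
      add_le_add (mul_le_mul_of_nonneg_left (le_max_left x z) (sub_nonneg.mpr hat))
        (mul_le_mul_of_nonneg_left (le_max_right x z) ha)
    _ = t * max x z := by ring

theorem min_div_le_div_of_le_max {c x y z : K} (hc : 0 ≤ c) (hy : 0 < y) (h : y ≤ max x z) :
    min (c / z) (c / x) ≤ c / y := by
  rcases le_max_iff.mp h with hyx | hyz
  · exact min_le_of_right_le (div_le_div_of_nonneg_left hc hy hyx)
  · exact min_le_of_left_le (div_le_div_of_nonneg_left hc hy hyz)

theorem min_div_le_div_of_chord {p a t L₀ La Lt : K} (hp0 : 0 < p) (hp1 : p < 1)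
    (ha : 0 < a) (hat : a ≤ t) (hLa : 1 ≤ La) (hchord : t * La ≤ (t - a) * L₀ + a * Lt) :
    min (p * (1 - p) / (t * (1 - p) + (Lt - 1) * p)) ((1 - p) / (L₀ - 1)) ≤
      p * (1 - p) / (a * (1 - p) + (La - 1) * p) := by
  have hq : 0 < 1 - p := sub_pos.mpr hp1
  have hden : 0 < a * (1 - p) + (La - 1) * p :=
    add_pos_of_pos_of_nonneg (mul_pos ha hq) (mul_nonneg (sub_nonneg.mpr hLa) hp0.le)
  have hden_chord : t * (a * (1 - p) + (La - 1) * p) ≤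
      (t - a) * (p * (L₀ - 1)) + a * (t * (1 - p) + (Lt - 1) * p) := by
    linear_combination p * hchord
  rw [← mul_div_mul_left (1 - p) (L₀ - 1) hp0.ne']
  exact min_div_le_div_of_le_max (mul_nonneg hp0.le hq.le) hden
    (le_max_of_mul_le_add_mul ha.le hat (ha.trans_le hat) hden_chord)

end OrderedField

theorem ceilDiv_pos {h b : ℕ} (hh : 0 < h) (hb : 0 < b) : 0 < ceilDiv h b :=
  Nat.div_pos (by omega) hb

theorem div_le_ceilDiv (h : ℕ) {b : ℕ} (hb : 0 < b) : (h : ℝ) / b ≤ ceilDiv h b := by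
  have hle : h ≤ b * ceilDiv h b := by
    simpa only [ceilDiv, Nat.ceilDiv_eq_add_pred_div, smul_eq_mul] using
      le_smul_ceilDiv (b := h) hb
  rw [div_le_iff₀' (by exact_mod_cast hb)]
  exact_mod_cast hle

theorem ceilDiv_le_div (h : ℕ) {b : ℕ} (hb : 0 < b) :
    (ceilDiv h b : ℝ) ≤ (h + (b - 1)) / b := by
  have hcast : ((h + b - 1 : ℕ) : ℝ) = h + (b - 1) := by
    rw [Nat.cast_sub (by omega)]
    push_cast
    ring
  rw [← hcast]
  exact Nat.cast_div_le

theorem chord_sub_div {K : Type*} [Field K] {a t x : K} (hx : x ≠ 0) (hxa : x + a ≠ 0)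
    (hxt : x + t ≠ 0) (h : K) :
    (t - a) * (h / x) + a * (h / (x + t)) - t * (h / (x + a)) =
      t * (a * (t - a) * h) / (x * (x + t) * (x + a)) := by
  field_simp
  ring

theorem mul_ceilDiv_le_chord {h b a t : ℕ} (hb : 0 < b) (hat : a ≤ t)
    (hgap : ((b : ℝ) + a - 1) * (b * (b + t)) ≤ a * (t - a) * h) :
    (t : ℝ) * ceilDiv h (b + a) ≤ (t - a) * ceilDiv h b + a * ceilDiv h (b + t) := by
  have : (0 : ℝ) < b := Nat.cast_pos.mpr hb
  have hsub : (0 : ℝ) ≤ t - a := sub_nonneg.mpr (by exact_mod_cast hat)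
  have hupper := ceilDiv_le_div h (Nat.add_pos_left hb a)
  have hlower := div_le_ceilDiv h hb
  have hlower' := div_le_ceilDiv h (Nat.add_pos_left hb t)
  push_cast at hupper hlower'
  have hround : t * ((b + a - 1) / (b + a)) ≤
      t * (a * (t - a) * h) / (b * (b + t) * (b + a) : ℝ) := by
    rw [mul_div_assoc, ← div_div]
    gcongr
    rwa [le_div_iff₀ (by positivity)]
  calc (t : ℝ) * ceilDiv h (b + a)
      ≤ t * ((h + (b + a - 1)) / (b + a)) := by gcongr
    _ = t * (h / (b + a)) + t * ((b + a - 1) / (b + a)) := by rw [add_div, mul_add]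
    _ ≤ t * (h / (b + a)) + t * (a * (t - a) * h) / (b * (b + t) * (b + a)) := by gcongr
    _ = (t - a) * (h / b) + a * (h / (b + t)) := by
      rw [← chord_sub_div (by positivity) (by positivity) (by positivity)]
      ring
    _ ≤ (t - a) * ceilDiv h b + a * ceilDiv h (b + t) := by gcongr

-- The left side divided by `a * (t - a)` is largest at `a = t - 1`, where it equals
-- `4t² + 8t + 7 + 6 / (t - 1)`.
theorem rounding_le_gap {a t h : ℝ} (ha : 1 ≤ a) (hat : a + 1 ≤ t)
    (hh : 4 * t ^ 2 + 8 * t + 13 ≤ h) :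
    (t + a) * ((t + 1) * (2 * t + 1)) ≤ a * (t - a) * h := by
  have hconcave : t - 1 ≤ a * (t - a) := by
    linear_combination mul_nonneg (sub_nonneg.mpr ha) (sub_nonneg.mpr hat)
  have ht : 2 ≤ t := by linarith
  calc (t + a) * ((t + 1) * (2 * t + 1))
      ≤ (2 * t - 1) * ((t + 1) * (2 * t + 1)) := by
        gcongr
        linarith
    _ ≤ (t - 1) * (4 * t ^ 2 + 8 * t + 13) := by linear_combination 6 * ht
    _ ≤ a * (t - a) * h := by gcongr; linarith

theorem stmt8_general (t h : ℕ) (ht : 1 ≤ t) (hh : 4 * t ^ 2 + 8 * t + 13 ≤ h)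
    (p : ℝ) (hp0 : 0 < p) (hp1 : p < 1) :
    min ((1 - p) / ((ceilDiv h (t + 1) : ℝ) - 1))
      ((Finset.Icc 1 t).inf' (Finset.nonempty_Icc.mpr ht)
        (fun a => p * (1 - p) / (a * (1 - p) + ((ceilDiv h (t + a + 1) : ℝ) - 1) * p)))
    = min (p * (1 - p) / (t * (1 - p) + ((ceilDiv h (2 * t + 1) : ℝ) - 1) * p))
        ((1 - p) / ((ceilDiv h (t + 1) : ℝ) - 1)) := by
  rw [two_mul]
  refine inf_inf'_Icc_eq_inf ht fun a ha hat => ?_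
  have hgap : ((t : ℝ) + a) * ((t + 1) * (2 * t + 1)) ≤ a * (t - a) * h :=
    rounding_le_gap (by exact_mod_cast ha) (by exact_mod_cast hat) (by exact_mod_cast hh)
  have hchord : (t : ℝ) * ceilDiv h (t + 1 + a) ≤
      (t - a) * ceilDiv h (t + 1) + a * ceilDiv h (t + 1 + t) :=
    mul_ceilDiv_le_chord t.succ_pos hat.le (by push_cast; linear_combination hgap)
  rw [add_right_comm t 1 a, add_right_comm t 1 t] at hchord
  exact min_div_le_div_of_chord hp0 hp1 (by exact_mod_cast ha) (by exact_mod_cast hat.le)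
    (by exact_mod_cast ceilDiv_pos (by omega) (by omega)) hchord

theorem stmt8 (t h : ℕ) (ht : 2 ≤ t) (hh : 4 * t ^ 2 + 10 * t + 24 ≤ h)
    (p : ℝ) (hp0 : 0 < p) (hp1 : p < 1) :
    min ((1 - p) / ((ceilDiv h (t + 1) : ℝ) - 1))
      ((Finset.Icc 1 t).inf' (Finset.nonempty_Icc.mpr (by omega : 1 ≤ t))
        (fun a => p * (1 - p) / (a * (1 - p) + ((ceilDiv h (t + a + 1) : ℝ) - 1) * p)))
    = min (p * (1 - p) / (t * (1 - p) + ((ceilDiv h (2 * t + 1) : ℝ) - 1) * p))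
        ((1 - p) / ((ceilDiv h (t + 1) : ℝ) - 1)) :=
  stmt8_general t h (by omega) (by omega) p hp0 hp1
end

section
/- Let t ≥ 2 be an integer, let a ∈ {1,…,t−1}, and let h ≥ 4t²+10t+24 be an integer. Set ℓ_0 = ⌈h/(t+1)⌉, ℓ_a = ⌈h/(t+a+1)⌉ and ℓ_t = ⌈h/(2t+1)⌉. Then (ℓ_0 − ℓ_a)(t − a) ≥ (ℓ_a − ℓ_t)·a, equivalently (t−a)·ℓ_0 + a·ℓ_t ≥ t·ℓ_a. -/
/-!
Since `t + a + 1` is the mean of `t + 1` and `2 * t + 1` with weights `t - a` and `a`, convexity of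
`x ↦ 1 / x` gives the inequality with the ceilings removed. Rounding up increases
`t * (h / (t + a + 1))` by less than `t`, so, both sides being integers, it is enough that the
convexity gap be at least `t - 1`. The gap is explicit and proportional to `h`; for
`h ≥ 2 * (t + 1) * (2 * t + 1)` it is at least `a * (t - a) ≥ t - 1`.
-/

theorem div_add_div_sub_div_eq {K : Type*} [Field K] {x p q : K} (hx : x ≠ 0) (hxp : x + p ≠ 0)
    (hxpq : x + p + q ≠ 0) :
    q / x + p / (x + p + q) - (p + q) / (x + p) =
      p * q * (p + q) / (x * (x + p) * (x + p + q)) := by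
  field_simp
  ring

theorem mul_ceil_le_of_mul_add_le {R : Type*} [Ring R] [LinearOrder R] [IsStrictOrderedRing R]
    [FloorRing R] {k m n : ℕ} {u v w : R} (hk : 0 < k) (h : k * w + k ≤ m * u + n * v + 1) :
    k * ⌈w⌉ ≤ m * ⌈u⌉ + n * ⌈v⌉ := by
  have hlt : (k : R) * ⌈w⌉ < m * ⌈u⌉ + n * ⌈v⌉ + 1 :=
    calc (k : R) * ⌈w⌉ < k * (w + 1) := by gcongr; exact Int.ceil_lt_add_one w
      _ = k * w + k := by rw [mul_add, mul_one]
      _ ≤ m * u + n * v + 1 := h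
      _ ≤ m * ⌈u⌉ + n * ⌈v⌉ + 1 := by gcongr <;> exact Int.le_ceil _
  exact Int.lt_add_one_iff.mp (mod_cast hlt)

section FloorField

variable {K : Type*} [Field K] [LinearOrder K] [IsStrictOrderedRing K] [FloorRing K]

theorem natCast_ceilDiv (m n : ℕ) : (ceilDiv m n : ℤ) = ⌈(m / n : K)⌉ := by
  rcases n.eq_zero_or_pos with rfl | hn
  · simp [ceilDiv]
  · rw [← Int.natCast_ceil_eq_ceil (by positivity), Nat.cast_inj]
    refine eq_of_forall_ge_iff fun k ↦ ?_
    rw [Nat.ceil_le, div_le_iff₀' (mod_cast hn), ceilDiv, ← Nat.ceilDiv_eq_add_pred_div,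
      ceilDiv_le_iff_le_mul hn]
    norm_cast

theorem add_mul_ceil_div_le (p q : ℕ) {x h : K} (hx : 0 < x)
    (h_large : x * (x + p) * (x + p + q) ≤ h * (p + q)) :
    (p + q) * ⌈h / (x + p)⌉ ≤ q * ⌈h / x⌉ + p * ⌈h / (x + p + q)⌉ := by
  rcases p.eq_zero_or_pos with rfl | hp
  · simp
  rcases q.eq_zero_or_pos with rfl | hq
  · simp
  have h_weights : (p + q : K) ≤ p * q + 1 :=
    mod_cast Nat.le_add_of_sub_le (Nat.add_sub_one_le_mul hp.ne' hq.ne')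
  have h_gap : (p * q : K) ≤ h * (p * q * (p + q) / (x * (x + p) * (x + p + q))) := by
    rw [← mul_div_assoc, le_div_iff₀ (by positivity)]
    calc (p * q : K) * (x * (x + p) * (x + p + q)) ≤ p * q * (h * (p + q)) := by gcongr
      _ = h * (p * q * (p + q)) := by ring
  rw [← div_add_div_sub_div_eq hx.ne' (by positivity) (by positivity)] at h_gap
  have h_round : ((p + q : ℕ) : K) * (h / (x + p)) + (p + q : ℕ) ≤
      q * (h / x) + p * (h / (x + p + q)) + 1 := by
    push_cast
    linear_combination h_gap + h_weights
  exact mod_cast mul_ceil_le_of_mul_add_le (by lia) h_round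

theorem stmt9_general {t a : ℕ} {h : K} (hat : a < t) (hh : 2 * (t + 1) * (2 * t + 1) ≤ h) :
    (t : ℤ) * ⌈h / (t + a + 1)⌉ ≤ (t - a) * ⌈h / (t + 1)⌉ + a * ⌈h / (2 * t + 1)⌉ := by
  obtain ⟨b, rfl⟩ := Nat.exists_eq_add_of_le hat.le
  have hb : (1 : K) ≤ b := mod_cast (by lia : 1 ≤ b)
  push_cast at hh ⊢
  have h_large : (a + b + 1 : K) * (a + b + 1 + a) * (a + b + 1 + a + b) ≤ h * (a + b) :=
    calc (a + b + 1 : K) * (a + b + 1 + a) * (a + b + 1 + a + b)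
        ≤ (a + b + 1) * (2 * (a + b)) * (a + b + 1 + a + b) := by gcongr; linarith
      _ = 2 * (a + b + 1) * (2 * (a + b) + 1) * (a + b) := by ring
      _ ≤ h * (a + b) := by gcongr
  have h_end : (a + b + 1 + a + b : K) = 2 * (a + b) + 1 := by ring
  rw [add_sub_cancel_left, ← h_end, add_right_comm (a + b : K) a 1]
  exact add_mul_ceil_div_le a b (by positivity) h_large

end FloorField

theorem stmt9 (t a h : ℕ) (ht : 2 ≤ t) (ha1 : 1 ≤ a) (ha2 : a ≤ t - 1)
    (hh : 4 * t ^ 2 + 10 * t + 24 ≤ h) :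
    ((ceilDiv h (t + 1) : ℤ) - (ceilDiv h (t + a + 1) : ℤ)) * ((t : ℤ) - (a : ℤ)) ≥
      ((ceilDiv h (t + a + 1) : ℤ) - (ceilDiv h (2 * t + 1) : ℤ)) * (a : ℤ) ∧
    ((t : ℤ) - (a : ℤ)) * (ceilDiv h (t + 1) : ℤ) + (a : ℤ) * (ceilDiv h (2 * t + 1) : ℤ) ≥
      (t : ℤ) * (ceilDiv h (t + a + 1) : ℤ) := by
  have main := stmt9_general (K := ℚ) (h := h) (by lia : a < t) (mod_cast (by linarith))
  push_cast [natCast_ceilDiv (K := ℚ)]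
  exact ⟨by linarith, main⟩
end

section
/- Let F be a connected finite simple graph on at least 3 vertices. Suppose there is a path P in F with the maximum number of vertices among all paths of F whose two endpoints are adjacent in F. Then F has a Hamiltonian cycle. -/
/-!
Closing a longest path `P` with the edge joining its endpoints gives a closed walk `c` that has more
edges than any path. If `c` missed a vertex, then by connectedness some edge would leave its
support, say from `x`; opening `c` at `x` and appending that edge would produce a path as long
as `c`. Hence `c` passes through every vertex, and since there are at least three of them, `c` is
a cycle rather than a single edge traversed back and forth.
-/

section ClosedWalk

open SimpleGraph

variable {V : Type*} {G : SimpleGraph V} {u : V} {c : G.Walk u u}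

theorem isPath_tail_rotate [DecidableEq V] (hc : c.tail.IsPath) {x : V} (hx : x ∈ c.support) :
    (c.rotate x hx).tail.IsPath := by
  by_cases hnil : c.Nil
  · have htail : (c.rotate x hx).tail.Nil := ((Walk.nil_rotate hx).mpr hnil).tail
    rw [Walk.isPath_def, Walk.nil_iff_support_eq.mp htail]
    exact List.nodup_singleton _
  have hnil' : ¬(c.rotate x hx).Nil := mt (Walk.nil_rotate hx).mp hnil
  rw [Walk.isPath_def, Walk.support_tail_of_not_nil _ hnil] at hc
  rw [Walk.isPath_def, Walk.support_tail_of_not_nil _ hnil']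
  exact (Walk.support_rotate c x hx).nodup_iff.mpr hc

theorem exists_isPath_length_eq_of_adj_notMem_support (hnil : ¬c.Nil) (hc : c.tail.IsPath) {x y : V}
    (hx : x ∈ c.support) (hy : y ∉ c.support) (hxy : G.Adj x y) :
    ∃ (z : V) (Q : G.Walk z y), Q.IsPath ∧ Q.length = c.length := by
  classical
  let r := c.rotate x hx
  have hr : ¬r.Nil := mt (Walk.nil_rotate hx).mp hnil
  have hyr : y ∉ r.tail.support := by
    rw [Walk.support_tail_of_not_nil r hr]
    exact fun h ↦ hy ((Walk.mem_support_rotate_iff c x hx).mp (List.mem_of_mem_tail h))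
  refine ⟨r.snd, r.tail.concat hxy,
    (Walk.concat_isPath_iff hxy).mpr ⟨isPath_tail_rotate hc hx, hyr⟩, ?_⟩
  rw [Walk.length_concat, Walk.length_tail_add_one hr, Walk.length_rotate]

theorem mem_support_of_forall_isPath_length_lt (hG : G.Preconnected) (hc : c.tail.IsPath)
    (hlt : ∀ (x y : V) (Q : G.Walk x y), Q.IsPath → Q.length < c.length) (w : V) :
    w ∈ c.support := by
  by_contra hw
  have hnil : ¬c.Nil := Walk.not_nil_iff_lt_length.mpr (hlt u u .nil .nil)
  obtain ⟨R⟩ := hG u w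
  obtain ⟨d, -, hfst, hsnd⟩ :=
    R.exists_boundary_dart {x | x ∈ c.support} c.start_mem_support hw
  obtain ⟨z, Q, hQ, hlen⟩ := exists_isPath_length_eq_of_adj_notMem_support hnil hc hfst hsnd d.adj
  exact (hlt z d.snd Q hQ).ne hlen

theorem isHamiltonianCycle_of_isHamiltonian_tail [DecidableEq V] (hcard : 3 ≤ ENat.card V)
    (hc : c.tail.IsHamiltonian) : c.IsHamiltonianCycle := by
  have := hc.fintype
  rw [ENat.card_eq_coe_fintype_card, Nat.ofNat_le_cast] at hcard
  have hlen : c.tail.length = Fintype.card V - 1 := hc.length_eq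
  have hnil : ¬c.Nil := fun h ↦ by
    have := Walk.length_eq_zero_iff.mpr h.tail
    omega
  have hadd : c.tail.length + 1 = c.length := Walk.length_tail_add_one hnil
  exact ⟨Walk.isCycle_iff_isPath_tail_and_le_length.mpr ⟨hc.isPath, by omega⟩, hc⟩

end ClosedWalk

theorem stmt16_general {V : Type*} [DecidableEq V] (F : SimpleGraph V) (hconn : F.Preconnected)
    (hcard : 3 ≤ ENat.card V)
    (hex : ∃ (u v : V) (P : F.Walk u v), P.IsPath ∧ F.Adj u v ∧
      ∀ (x y : V) (Q : F.Walk x y), Q.IsPath → Q.length ≤ P.length) :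
    ∃ (v : V) (c : F.Walk v v), c.IsHamiltonianCycle := by
  obtain ⟨u, v, P, hP, huv, hmax⟩ := hex
  let c : F.Walk v v := .cons huv.symm P
  have hc : c.tail.IsPath := by simpa [c] using hP
  have hlt (x y : V) (Q : F.Walk x y) (hQ : Q.IsPath) : Q.length < c.length :=
    Nat.lt_succ_of_le (hmax x y Q hQ)
  have hspan (w : V) : w ∈ c.tail.support := by
    have hw : w ∈ c.support := mem_support_of_forall_isPath_length_lt hconn hc hlt w
    rcases c.mem_support_iff.mp hw with rfl | hw
    · exact c.tail.end_mem_support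
    · simpa [c] using hw
  exact ⟨v, c, isHamiltonianCycle_of_isHamiltonian_tail hcard (hc.isHamiltonian_of_mem hspan)⟩

theorem stmt16 {V : Type*} [Fintype V] [DecidableEq V] (F : SimpleGraph V) (hconn : F.Connected)
    (hcard : 3 ≤ Fintype.card V)
    (hex : ∃ (u v : V) (P : F.Walk u v), P.IsPath ∧ F.Adj u v ∧
      ∀ (x y : V) (Q : F.Walk x y), Q.IsPath → Q.length ≤ P.length) :
    ∃ (v : V) (c : F.Walk v v), c.IsHamiltonianCycle :=
  stmt16_general F hconn.preconnected (by simpa using hcard) hex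
end

section
/- Let h and t be positive integers, set ℓ_0 = ⌈h/(t+1)⌉, and let p be a real number with 1/2 ≤ p ≤ 1. (a) If h ≥ (t+1)²+1, then (1−p)/(ℓ_0−1) ≤ p/(t+1). (b) For each a ∈ {1,…,t}, if h ≥ (t+1)(t+a)+1, then (1−p)/(ℓ_0−1) ≤ p(1−p)/(a(1−p)+(ℓ_a−1)p), where ℓ_a = ⌈h/(t+a+1)⌉. -/
/-!
Since `c < ⌈h/d⌉` means `d * c < h`, everything about the ceilings is read off integer products.
The key inequality `ℓ_a + a ≤ ℓ_0` follows with `k = ℓ_a - 1`: either `k ≤ t`, and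
`(t + 1) * (k + a) ≤ (t + 1) * (t + a) < h` by assumption, or `k ≥ t + 1`, and
`(t + 1) * (k + a) ≤ (t + a + 1) * k < h`. For `1 / 2 ≤ p ≤ 1` it bounds the denominator
`a * (1 - p) + (ℓ_a - 1) * p` by `(a + ℓ_a - 1) * p ≤ (ℓ_0 - 1) * p`.
-/

theorem lt_ceilDiv_iff_mul_lt {c d h : ℕ} (hd : 0 < d) : c < ceilDiv h d ↔ d * c < h := by
  have h_le : h ⌈/⌉ d ≤ c ↔ h ≤ d * c := ceilDiv_le_iff_le_mul hd
  exact lt_iff_lt_of_le_iff_le h_le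

theorem add_lt_ceilDiv_of_lt_ceilDiv {a h k t : ℕ} (hh : (t + 1) * (t + a) < h)
    (hk : k < ceilDiv h (t + a + 1)) : k + a < ceilDiv h (t + 1) := by
  rw [lt_ceilDiv_iff_mul_lt (Nat.succ_pos _)] at hk ⊢
  rcases Nat.lt_or_ge t k with htk | hkt
  · calc (t + 1) * (k + a) = (t + 1) * k + a * (t + 1) := by ring
      _ ≤ (t + 1) * k + a * k := by gcongr; exact htk
      _ = (t + a + 1) * k := by ring
      _ < h := hk
  · calc (t + 1) * (k + a) ≤ (t + 1) * (t + a) := by gcongr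
      _ < h := hh

theorem ceilDiv_add_le_ceilDiv {a h t : ℕ} (hh : (t + 1) * (t + a) < h) :
    ceilDiv h (t + a + 1) + a ≤ ceilDiv h (t + 1) := by
  have h_pos : 0 < ceilDiv h (t + a + 1) :=
    (lt_ceilDiv_iff_mul_lt (Nat.succ_pos _)).2 (by omega)
  have h_pred : ceilDiv h (t + a + 1) - 1 + a < ceilDiv h (t + 1) :=
    add_lt_ceilDiv_of_lt_ceilDiv hh (Nat.sub_one_lt_of_lt h_pos)
  omega

section OrderedField

variable {K : Type*} [Field K] [LinearOrder K] [IsStrictOrderedRing K] {p : K}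

theorem one_sub_div_le_div {m s : K} (hp : 1 / 2 ≤ p) (hs : 0 < s) (hsm : s ≤ m) :
    (1 - p) / m ≤ p / s :=
  div_le_div₀ (by linarith) (by linarith) hs hsm

theorem one_sub_div_le_mul_div {a k m : K} (hp : 1 / 2 ≤ p) (hp1 : p ≤ 1) (ha : 0 ≤ a)
    (hk : 0 < k) (hakm : a + k ≤ m) :
    (1 - p) / m ≤ p * (1 - p) / (a * (1 - p) + k * p) := by
  have hp0 : 0 < p := by linarith
  have hq0 : 0 ≤ 1 - p := by linarith
  have h_denom_pos : 0 < a * (1 - p) + k * p :=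
    add_pos_of_nonneg_of_pos (mul_nonneg ha hq0) (mul_pos hk hp0)
  have h_denom_le : a * (1 - p) + k * p ≤ p * m :=
    calc a * (1 - p) + k * p ≤ a * p + k * p := by gcongr; linarith
      _ = p * (a + k) := by ring
      _ ≤ p * m := by gcongr
  calc (1 - p) / m = p * (1 - p) / (p * m) := (mul_div_mul_left _ _ hp0.ne').symm
    _ ≤ p * (1 - p) / (a * (1 - p) + k * p) :=
      div_le_div_of_nonneg_left (mul_nonneg hp0.le hq0) h_denom_pos h_denom_le

end OrderedField

theorem one_sub_div_ceilDiv_le_div {h t : ℕ} {p : ℝ} (hp : 1 / 2 ≤ p)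
    (hh : (t + 1) ^ 2 + 1 ≤ h) :
    (1 - p) / ((ceilDiv h (t + 1) : ℝ) - 1) ≤ p / (t + 1) := by
  have h_lt : t + 1 < ceilDiv h (t + 1) :=
    (lt_ceilDiv_iff_mul_lt t.succ_pos).2 (by rwa [← sq])
  have h_cast : (t + 1 : ℝ) + 1 ≤ ceilDiv h (t + 1) := mod_cast h_lt
  exact one_sub_div_le_div hp (by positivity) (by linarith)

theorem one_sub_div_ceilDiv_le_mul_div {a h t : ℕ} {p : ℝ} (ht : 1 ≤ t) (hp : 1 / 2 ≤ p)
    (hp1 : p ≤ 1) (hh : (t + 1) * (t + a) + 1 ≤ h) :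
    (1 - p) / ((ceilDiv h (t + 1) : ℝ) - 1) ≤
      p * (1 - p) / (a * (1 - p) + ((ceilDiv h (t + a + 1) : ℝ) - 1) * p) := by
  have h_one_lt : 1 < ceilDiv h (t + a + 1) :=
    (lt_ceilDiv_iff_mul_lt (Nat.succ_pos _)).2 (by nlinarith)
  have h_add_le : (ceilDiv h (t + a + 1) : ℝ) + a ≤ ceilDiv h (t + 1) :=
    mod_cast ceilDiv_add_le_ceilDiv hh
  exact one_sub_div_le_mul_div hp hp1 a.cast_nonneg
    (sub_pos.2 (mod_cast h_one_lt)) (by linarith)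

theorem stmt18_general (h t : ℕ) (p : ℝ) (hp : 1 / 2 ≤ p) :
    ((t + 1) ^ 2 + 1 ≤ h →
      (1 - p) / ((ceilDiv h (t + 1) : ℝ) - 1) ≤ p / (t + 1)) ∧
    (1 ≤ t → p ≤ 1 → ∀ a : ℕ, (t + 1) * (t + a) + 1 ≤ h →
      (1 - p) / ((ceilDiv h (t + 1) : ℝ) - 1) ≤
        p * (1 - p) / (a * (1 - p) + ((ceilDiv h (t + a + 1) : ℝ) - 1) * p)) :=
  ⟨one_sub_div_ceilDiv_le_div hp, fun ht hp1 _ => one_sub_div_ceilDiv_le_mul_div ht hp hp1⟩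

theorem stmt18 (h t : ℕ) (hh : 1 ≤ h) (ht : 1 ≤ t) (p : ℝ)
    (hp : 1 / 2 ≤ p) (hp1 : p ≤ 1) :
    ((t + 1) ^ 2 + 1 ≤ h →
      (1 - p) / ((ceilDiv h (t + 1) : ℝ) - 1) ≤ p / (t + 1)) ∧
    (∀ a : ℕ, 1 ≤ a → a ≤ t → (t + 1) * (t + a) + 1 ≤ h →
      (1 - p) / ((ceilDiv h (t + 1) : ℝ) - 1) ≤
        p * (1 - p) / (a * (1 - p) + ((ceilDiv h (t + a + 1) : ℝ) - 1) * p)) :=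
  have ⟨part_a, part_b⟩ := stmt18_general h t p hp
  ⟨part_a, fun a _ _ => part_b ht hp1 a⟩
end

section
/- Let t ≥ 1 and h ≥ 2t+2 be integers, for a ∈ {0,…,t} set ℓ_a = ⌈h/(t+a+1)⌉, and set p_0 = 1/ℓ_t = 1/⌈h/(2t+1)⌉. Then for every real p with 0 < p ≤ p_0, min( p/(t+1), (1−p)/(ℓ_0−1), min_{a∈{1,…,t}} p(1−p)/(a(1−p)+(ℓ_a−1)p) ) = p/(t+1). -/
/-!
Put `p₀ = 1 / ⌈h / (n + c)⌉`. For `p ≤ p₀`, writing `m + 1 = ⌈h / (n + c)⌉` gives `m * p ≤ 1 - p`.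
Since `(n + c) * (m + 1) ≤ n * ((c + 1) * m + 1)` when `n ≥ 2` and `m ≥ 1`, it follows that
`⌈h / n⌉ - 1 ≤ (c + 1) * m`, and hence `(⌈h / n⌉ - 1) * p ≤ (c + 1) * (1 - p)`. With
`n = t + a + 1` and `c = t - a`, so that `n + c = 2 * t + 1`, the denominator
`a * (1 - p) + (ℓ_a - 1) * p` is therefore at most `(t + 1) * (1 - p)`.
-/

section CeilDiv

variable {h b c m n : ℕ}

lemma ceilDiv_le_iff (hb : 0 < b) : ceilDiv h b ≤ m ↔ h ≤ b * m := by
  rw [ceilDiv, ← Nat.ceilDiv_eq_add_pred_div, ceilDiv_le_iff_le_mul hb]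

lemma lt_ceilDiv_iff (hb : 0 < b) : m < ceilDiv h b ↔ b * m < h :=
  lt_iff_lt_of_le_iff_le (ceilDiv_le_iff hb)

lemma one_lt_ceilDiv (hb : 0 < b) (hbh : b < h) : 1 < ceilDiv h b :=
  (lt_ceilDiv_iff hb).2 (by rwa [mul_one])

lemma ceilDiv_le_of_ceilDiv_add_le (hn : 2 ≤ n) (hm : 1 ≤ m) (hle : ceilDiv h (n + c) ≤ m + 1) :
    ceilDiv h n ≤ (c + 1) * m + 1 := by
  rw [ceilDiv_le_iff (by lia)] at hle ⊢
  have add_one_le : m + 1 ≤ n * m := by nlinarith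
  calc h ≤ (n + c) * (m + 1) := hle
    _ = n * (m + 1) + c * (m + 1) := by ring
    _ ≤ n * (m + 1) + c * (n * m) := by gcongr
    _ = n * ((c + 1) * m + 1) := by ring

end CeilDiv

section OrderedField

variable {𝕜 : Type*} [Field 𝕜] [LinearOrder 𝕜] [IsStrictOrderedRing 𝕜] {h n c : ℕ} {p : 𝕜}

lemma ceilDiv_sub_one_mul_le (hn : 2 ≤ n) (hh : n + c < h) (hp0 : 0 ≤ p)
    (hp : p ≤ 1 / (ceilDiv h (n + c) : 𝕜)) :
    ((ceilDiv h n : 𝕜) - 1) * p ≤ (c + 1) * (1 - p) := by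
  have one_lt : 1 < ceilDiv h (n + c) := one_lt_ceilDiv (by lia) hh
  obtain ⟨m, hm⟩ := Nat.exists_eq_add_of_le' one_lt.le
  have ceilDiv_le : (ceilDiv h n : 𝕜) ≤ (c + 1) * m + 1 :=
    mod_cast ceilDiv_le_of_ceilDiv_add_le hn (by lia) hm.le
  have mul_le : m * p ≤ 1 - p := by
    rw [hm, le_div_iff₀ (by positivity)] at hp
    push_cast at hp
    linarith
  calc ((ceilDiv h n : 𝕜) - 1) * p ≤ ((c + 1) * m) * p := by gcongr; linarith
    _ = (c + 1) * (m * p) := by ring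
    _ ≤ (c + 1) * (1 - p) := by gcongr

lemma div_add_one_le_mul_one_sub_div {a : 𝕜} (ha : 0 ≤ a) (hn : 2 ≤ n) (hh : n + c < h)
    (hp0 : 0 < p) (hp : p ≤ 1 / (ceilDiv h (n + c) : 𝕜)) :
    p / (a + c + 1) ≤ p * (1 - p) / (a * (1 - p) + ((ceilDiv h n : 𝕜) - 1) * p) := by
  have sub_one_mul_le := ceilDiv_sub_one_mul_le hn hh hp0.le hp
  have sub_one_mul_pos : 0 < ((ceilDiv h n : 𝕜) - 1) * p :=
    mul_pos (sub_pos.2 (mod_cast one_lt_ceilDiv (by lia) (by lia))) hp0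
  have one_sub_pos : 0 < 1 - p :=
    pos_of_mul_pos_right (sub_one_mul_pos.trans_le sub_one_mul_le) (by positivity)
  rw [div_le_div_iff₀ (by positivity) (by positivity), mul_assoc]
  gcongr
  linarith

end OrderedField

theorem stmt19 (t h : ℕ) (ht : 1 ≤ t) (hh : 2 * t + 2 ≤ h) (p : ℝ)
    (hp0 : 0 < p) (hp : p ≤ 1 / (ceilDiv h (2 * t + 1) : ℝ)) :
    min (p / (t + 1))
      (min ((1 - p) / ((ceilDiv h (t + 1) : ℝ) - 1))
        ((Finset.Icc 1 t).inf' (Finset.nonempty_Icc.mpr ht)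
          (fun a => p * (1 - p) / (a * (1 - p) + ((ceilDiv h (t + a + 1) : ℝ) - 1) * p))))
    = p / (t + 1) := by
  have le_term (a : ℕ) (ha : a ≤ t) : p / (t + 1) ≤
      p * (1 - p) / (a * (1 - p) + ((ceilDiv h (t + a + 1) : ℝ) - 1) * p) := by
    have index_eq : t + a + 1 + (t - a) = 2 * t + 1 := by lia
    have cast_eq : (a : ℝ) + (t - a : ℕ) = t := mod_cast Nat.add_sub_of_le ha
    rw [← index_eq] at hp
    simpa only [cast_eq] using
      div_add_one_le_mul_one_sub_div a.cast_nonneg (by lia) (by lia) hp0 hp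
  -- The second argument of the minimum is the term `a = 0` with the factor `p` cancelled.
  have le_zeroth : p / (t + 1) ≤ (1 - p) / ((ceilDiv h (t + 1) : ℝ) - 1) := by
    simpa only [Nat.cast_zero, zero_mul, zero_add, add_zero, mul_comm _ p,
      mul_div_mul_left _ _ hp0.ne'] using le_term 0 t.zero_le
  exact min_eq_left <| le_min le_zeroth <|
    Finset.le_inf' _ _ fun a ha => le_term a (Finset.mem_Icc.mp ha).2
end
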